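/- arXiv:2109.05143 — 4 statements merged into one kernel-verified Lean document; each statement's English description precedes it below -/
import Mathlib

section
/- Let f_L, f_R : ℝ → ℝ be bounded, continuously differentiable functions with bounded derivatives, define f(y) = f_R(y) for y ≥ 0 and f(y) = f_L(y) for y < 0, set c = f_R(0) − f_L(0), and define g(y) = f_R'(y) for y ≥ 0 and g(y) = f_L'(y) for y < 0. Let μ : ℝ → ℝ be a continuous probability density. Then the bundled objective f̄(x) = ∫ f(x+w) μ(w) dw is differentiable at every x ∈ ℝ, with f̄'(x) = ∫ g(x+w) μ(w) dw + c·μ(−x). (Precise form of the identity underlying paper Theorem 1: the derivative of the smoothed function differs from the expectation of the almost-everywhere derivative by the jump magnitude times the density.) -/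
/-!
Subtracting the jump leaves a continuous function: `f y = h y + c * 𝟙[0 ≤ y]` with
`h y = fL (min y 0) + fR (max y 0) - fR 0` (`contPart` below). This `h` is globally Lipschitz, being
assembled from `C¹` functions with bounded derivatives, and has derivative `g` away from `0`, so
`∫ h (x + w) * μ w` may be differentiated under the integral sign and contributes
`∫ g (x + w) * μ w`. The jump contributes `c` times the tail mass `∫ w in Ici (-x), μ w`, whose
derivative is `μ (-x)` by the fundamental theorem of calculus and continuity of `μ`.
-/

open MeasureTheory Set Filter Topology

/-- The continuous part of the function equal to `fL` on the negative and to `fR` on the nonnegative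
half-line: the right branch is translated so that it agrees with `fL` at `0`. -/
def contPart (fL fR : ℝ → ℝ) (y : ℝ) : ℝ := fL (min y 0) + fR (max y 0) - fR 0

lemma abs_sub_le_of_deriv_bound {F : ℝ → ℝ} (hF : ContDiff ℝ 1 F) {D : ℝ}
    (hD : ∀ y, |deriv F y| ≤ D) (a b : ℝ) : |F a - F b| ≤ D * |a - b| := by
  have := convex_univ.norm_image_sub_le_of_norm_deriv_le (f := F) (C := D) (x := b) (y := a)
    (fun y _ => (hF.differentiable one_ne_zero) y) (fun y _ => hD y) (mem_univ _) (mem_univ _)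
  simpa [Real.norm_eq_abs] using this

lemma abs_contPart_sub_le {fL fR : ℝ → ℝ} (hfL : ContDiff ℝ 1 fL) (hfR : ContDiff ℝ 1 fR)
    {DL DR : ℝ} (hDL : ∀ y, |deriv fL y| ≤ DL) (hDR : ∀ y, |deriv fR y| ≤ DR) (a b : ℝ) :
    |contPart fL fR a - contPart fL fR b| ≤ (DL + DR) * |a - b| := by
  have hL := abs_sub_le_of_deriv_bound hfL hDL (min a 0) (min b 0)
  have hR := abs_sub_le_of_deriv_bound hfR hDR (max a 0) (max b 0)
  have hDL0 : 0 ≤ DL := (abs_nonneg _).trans (hDL 0)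
  have hDR0 : 0 ≤ DR := (abs_nonneg _).trans (hDR 0)
  have h1 : |min a 0 - min b 0| ≤ |a - b| := by
    simpa using abs_min_sub_min_le_max a 0 b 0
  have h2 : |max a 0 - max b 0| ≤ |a - b| := abs_max_sub_max_le_abs a b 0
  calc |contPart fL fR a - contPart fL fR b|
      = |(fL (min a 0) - fL (min b 0)) + (fR (max a 0) - fR (max b 0))| := by
        unfold contPart; congr 1; ring
    _ ≤ DL * |a - b| + DR * |a - b| := (abs_add_le _ _).trans
        (add_le_add (hL.trans (by gcongr)) (hR.trans (by gcongr)))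
    _ = (DL + DR) * |a - b| := by ring

lemma hasDerivAt_contPart {fL fR : ℝ → ℝ} (hfL : ContDiff ℝ 1 fL) (hfR : ContDiff ℝ 1 fR)
    {y : ℝ} (hy : y ≠ 0) :
    HasDerivAt (contPart fL fR) (if 0 ≤ y then deriv fR y else deriv fL y) y := by
  rcases lt_or_gt_of_ne hy with h | h
  · rw [if_neg h.not_ge]
    refine (hfL.differentiable one_ne_zero y).hasDerivAt.congr_of_eventuallyEq ?_
    filter_upwards [Iio_mem_nhds h] with z hz
    have hz' : z ≤ 0 := le_of_lt hz
    simp [contPart, hz']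
  · rw [if_pos h.le]
    refine ((hfR.differentiable one_ne_zero y).hasDerivAt.add_const
      (fL 0 - fR 0)).congr_of_eventuallyEq ?_
    filter_upwards [Ioi_mem_nhds h] with z hz
    have hz' : 0 ≤ z := le_of_lt hz
    simp only [contPart, min_eq_right hz', max_eq_left hz']
    ring

lemma hasDerivAt_integral_Ici_neg {μ : ℝ → ℝ} (hμ : Continuous μ) (hi : Integrable μ) (x : ℝ) :
    HasDerivAt (fun x : ℝ => ∫ w in Ici (-x), μ w) (μ (-x)) x := by
  have h : (fun x : ℝ => ∫ w in Ici (-x), μ w)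
      = fun x : ℝ => (∫ w in Ioi 0, μ w) - ∫ w in (0 : ℝ)..(-x), μ w := by
    funext z
    rw [integral_Ici_eq_integral_Ioi, ← intervalIntegral.integral_Ioi_sub_Ioi' hi.integrableOn
      hi.integrableOn]
    ring
  rw [h]
  have h1 : HasDerivAt (fun u : ℝ => ∫ w in (0 : ℝ)..u, μ w) (μ (-x)) (-x) :=
    hμ.integral_hasStrictDerivAt 0 (-x) |>.hasDerivAt
  have h2 := (h1.comp x (hasDerivAt_neg x)).const_sub (∫ w in Ioi 0, μ w)
  simpa [Function.comp_def] using h2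

/-- Precise identity underlying paper Theorem 1: for a piecewise-`C¹` function `f`
with a single jump of magnitude `c = f_R 0 - f_L 0` at the origin, smoothed by a
continuous probability density `μ`, the bundled objective is differentiable and
its derivative equals the expectation of the a.e. derivative `g` plus the
correction term `c * μ (-x)`. -/
theorem deriv_bundled_objective_of_jump_discontinuity
    (fL fR : ℝ → ℝ)
    (hfL : ContDiff ℝ 1 fL) (hfR : ContDiff ℝ 1 fR)
    (CL : ℝ) (hCL : ∀ y : ℝ, |fL y| ≤ CL) (CR : ℝ) (hCR : ∀ y : ℝ, |fR y| ≤ CR)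
    (DL : ℝ) (hDL : ∀ y : ℝ, |deriv fL y| ≤ DL)
    (DR : ℝ) (hDR : ∀ y : ℝ, |deriv fR y| ≤ DR)
    (f : ℝ → ℝ) (hf : ∀ y : ℝ, f y = if 0 ≤ y then fR y else fL y)
    (c : ℝ) (hc : c = fR 0 - fL 0)
    (g : ℝ → ℝ) (hg : ∀ y : ℝ, g y = if 0 ≤ y then deriv fR y else deriv fL y)
    (μ : ℝ → ℝ) (hμcont : Continuous μ) (hμpos : ∀ w : ℝ, 0 ≤ μ w)
    (hμint : ∫ w : ℝ, μ w = 1)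
    (x : ℝ) :
    HasDerivAt (fun x : ℝ => ∫ w : ℝ, f (x + w) * μ w)
      ((∫ w : ℝ, g (x + w) * μ w) + c * μ (-x)) x := by
  have hi : Integrable μ := by
    by_contra h
    rw [integral_undef h] at hμint
    exact zero_ne_one hμint
  have hcont : Continuous (contPart fL fR) := by
    have := hfL.continuous
    have := hfR.continuous
    unfold contPart
    fun_prop
  have hbdd : ∀ y, ‖contPart fL fR y‖ ≤ CL + CR + CR := fun y => by
    have h1 := abs_le.1 (hCL (min y 0))
    have h2 := abs_le.1 (hCR (max y 0))
    have h3 := abs_le.1 (hCR 0)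
    rw [Real.norm_eq_abs, abs_le]
    unfold contPart
    constructor <;> linarith
  have hint : ∀ z, Integrable (fun w => contPart fL fR (z + w) * μ w) := fun z =>
    hi.bdd_mul (by fun_prop) (Eventually.of_forall fun w => hbdd (z + w))
  have hgm : Measurable g := by
    have : g = fun y => if 0 ≤ y then deriv fR y else deriv fL y := funext hg
    rw [this]
    exact Measurable.ite measurableSet_Ici (measurable_deriv _) (measurable_deriv _)
  have hmain : HasDerivAt (fun z : ℝ => ∫ w, contPart fL fR (z + w) * μ w)
      (∫ w, g (x + w) * μ w) x := by
    refine (hasDerivAt_integral_of_dominated_loc_of_lip (s := univ)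
      (bound := fun w => (DL + DR) * μ w) univ_mem
      (Eventually.of_forall fun z => (hint z).aestronglyMeasurable) (hint x) ?_ ?_
      (hi.const_mul _) ?_).2
    · exact ((hgm.comp (measurable_const_add x)).mul hμcont.measurable).aestronglyMeasurable
    · refine Eventually.of_forall fun w => LipschitzOnWith.of_dist_le_mul fun a _ b _ => ?_
      have hlip := abs_contPart_sub_le hfL hfR hDL hDR (a + w) (b + w)
      rw [add_sub_add_right_eq_sub] at hlip
      rw [Real.dist_eq, Real.dist_eq, ← sub_mul, abs_mul, abs_of_nonneg (hμpos w),
        Real.coe_nnabs]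
      calc _ ≤ (DL + DR) * |a - b| * μ w := mul_le_mul_of_nonneg_right hlip (hμpos w)
        _ = (DL + DR) * μ w * |a - b| := by ring
        _ ≤ _ := mul_le_mul_of_nonneg_right (le_abs_self _) (abs_nonneg _)
    · -- The kink of `contPart` is met only at the single point `w = -x`.
      filter_upwards [Measure.ae_ne volume (-x)] with w hw
      have hxw : x + w ≠ 0 := fun h => hw (by linarith)
      rw [hg]
      exact ((hasDerivAt_contPart hfL hfR hxw).comp_add_const x w).mul_const (μ w)
  have hsplit : (fun z : ℝ => ∫ w, f (z + w) * μ w)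
      = fun z => (∫ w, contPart fL fR (z + w) * μ w) + c * ∫ w in Ici (-z), μ w := by
    funext z
    rw [← integral_indicator measurableSet_Ici, ← integral_const_mul,
      ← integral_add (hint z) ((hi.indicator measurableSet_Ici).const_mul c)]
    congr 1
    funext w
    rw [hf, hc]
    by_cases h : 0 ≤ z + w
    · have hw : w ∈ Ici (-z) := by rw [mem_Ici]; linarith
      rw [if_pos h, indicator_of_mem hw, contPart, min_eq_right h, max_eq_left h]
      ring
    · have hw : w ∉ Ici (-z) := by rw [mem_Ici]; intro h'; exact h (by linarith)
      have h' := (not_le.1 h).le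
      rw [if_neg h, indicator_of_notMem hw, contPart, min_eq_left h', max_eq_right h']
      ring
  rw [hsplit]
  exact hmain.add ((hasDerivAt_integral_Ici_neg hμcont hi x).const_mul c)
end

section
/- Let f(x) = x² + 0.1·sin(20x) and σ > 0. Then the bundled objective under Gaussian smoothing satisfies, for every x ∈ ℝ: ∫ f(x+w) φ_σ(w) dw = x² + σ² + 0.1·exp(−200σ²)·sin(20x). (Explicit form of the smoothed objective in paper Example 1.) -/
/-!
The integral is the expectation of `f` under the normal law `N(x, σ²)`. The quadratic part is the
second moment, variance plus squared mean. The sine part is the imaginary part of the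
characteristic function `exp (i t x - σ² t² / 2)` at the frequency `t = 20`.
-/

open MeasureTheory Real

lemma integral_sq_gaussianReal (m : ℝ) (v : NNReal) :
    ∫ y, y ^ 2 ∂(ProbabilityTheory.gaussianReal m v) = m ^ 2 + v := by
  have h := ProbabilityTheory.variance_eq_sub
    (ProbabilityTheory.memLp_id_gaussianReal (μ := m) (v := v) 2)
  rw [ProbabilityTheory.variance_id_gaussianReal] at h
  simp only [Pi.pow_apply, id_eq, ProbabilityTheory.integral_id_gaussianReal] at h
  linarith

lemma integral_sin_gaussianReal (m : ℝ) (v : NNReal) (t : ℝ) :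
    ∫ y, Real.sin (t * y) ∂(ProbabilityTheory.gaussianReal m v)
      = Real.exp (-(v * t ^ 2 / 2)) * Real.sin (t * m) := by
  have h := ProbabilityTheory.charFun_gaussianReal (μ := m) (v := v) t
  rw [charFun_apply_real] at h
  have hint : Integrable (fun y : ℝ => Complex.exp (t * y * Complex.I))
      (ProbabilityTheory.gaussianReal m v) := by
    refine Integrable.of_bound (by fun_prop) 1 (Filter.Eventually.of_forall fun y => ?_)
    rw [← Complex.ofReal_mul, Complex.norm_exp_ofReal_mul_I]
  have h2 := congrArg Complex.im h
  have h3 := integral_im hint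
  simp only [RCLike.im_to_complex] at h3
  rw [← h3, Complex.exp_im] at h2
  have hl : ∀ y : ℝ, (Complex.exp (t * y * Complex.I)).im = Real.sin (t * y) := fun y => by
    rw [← Complex.ofReal_mul, Complex.exp_ofReal_mul_I_im]
  simp only [hl] at h2
  rw [h2]
  have e : (t * m * Complex.I - v * t ^ 2 / 2 : ℂ)
      = ((-(v * t ^ 2 / 2) : ℝ) : ℂ) + ((t * m : ℝ) : ℂ) * Complex.I := by
    push_cast; ring
  rw [e, Complex.add_re, Complex.add_im, Complex.re_ofReal_mul, Complex.im_ofReal_mul,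
    Complex.ofReal_re, Complex.ofReal_im]
  simp

/-- Explicit form of the smoothed objective in paper Example 1: for
`f x = x² + 0.1 sin (20 x)`, Gaussian smoothing gives
`f̄ x = x² + σ² + 0.1 exp (-200 σ²) sin (20 x)`. -/
theorem gaussian_smoothing_of_example_objective
    (σ : ℝ) (hσ : 0 < σ)
    (f : ℝ → ℝ) (hf : ∀ y : ℝ, f y = y ^ 2 + 0.1 * Real.sin (20 * y))
    (φ : ℝ → ℝ)
    (hφ : ∀ w : ℝ, φ w = (σ * Real.sqrt (2 * Real.pi))⁻¹ * Real.exp (-w ^ 2 / (2 * σ ^ 2)))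
    (x : ℝ) :
    (∫ w : ℝ, f (x + w) * φ w)
      = x ^ 2 + σ ^ 2 + 0.1 * Real.exp (-200 * σ ^ 2) * Real.sin (20 * x) := by
  obtain ⟨v, hv⟩ : ∃ v : NNReal, (v : ℝ) = σ ^ 2 := ⟨⟨σ ^ 2, sq_nonneg σ⟩, rfl⟩
  have hv0 : v ≠ 0 := by
    intro h
    rw [h] at hv
    have := pow_pos hσ 2
    simp at hv
    linarith
  have hpdf : ∀ w, φ w = ProbabilityTheory.gaussianPDFReal x v (x + w) := fun w => by
    rw [hφ, ProbabilityTheory.gaussianPDFReal, hv, add_sub_cancel_left,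
      Real.sqrt_mul (by positivity) (σ ^ 2), Real.sqrt_sq hσ.le, mul_comm σ]
  have key : (∫ w : ℝ, f (x + w) * φ w) = ∫ y, f y ∂(ProbabilityTheory.gaussianReal x v) := by
    rw [ProbabilityTheory.integral_gaussianReal_eq_integral_smul hv0]
    simp only [hpdf, smul_eq_mul, mul_comm (f _)]
    exact integral_add_left_eq_self (fun y => ProbabilityTheory.gaussianPDFReal x v y * f y) x
  have hsq : Integrable (fun y : ℝ => y ^ 2) (ProbabilityTheory.gaussianReal x v) :=
    (ProbabilityTheory.memLp_id_gaussianReal (μ := x) (v := v) 2).integrable_sq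
  have hsin : Integrable (fun y : ℝ => 0.1 * Real.sin (20 * y))
      (ProbabilityTheory.gaussianReal x v) := by
    refine Integrable.const_mul (Integrable.of_bound (by fun_prop) 1
      (Filter.Eventually.of_forall fun y => ?_)) _
    simpa using Real.abs_sin_le_one (20 * y)
  rw [key]
  simp only [hf]
  rw [integral_add hsq hsin, integral_const_mul, integral_sq_gaussianReal,
    integral_sin_gaussianReal, hv,
    show -(σ ^ 2 * 20 ^ 2 / 2) = -200 * σ ^ 2 by ring]
  ring
end

section
/- Let σ > 0 satisfy σ² > (ln 20)/200, equivalently 40·exp(−200σ²) < 2. Then the function f̄(x) = x² + σ² + 0.1·exp(−200σ²)·sin(20x), which is the Gaussian-smoothed version of f(x) = x² + 0.1·sin(20x), is strictly convex on ℝ. (Paper Example 1: under a suitable choice of Gaussian kernel, the function with many local minima is smoothed out to be convex.) -/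
/-!
The second derivative of the smoothed objective is `2 - 40 exp (-200 σ²) sin (20 x)`. The
hypothesis `log 20 / 200 < σ²` says exactly that `exp (-200 σ²) < 1 / 20`, so the oscillating
term has amplitude below `2` and the second derivative is positive everywhere. Strict convexity
then follows from `strictConvexOn_univ_of_deriv2_pos`.
-/

open Real

/-- Paper Example 1: under a suitable Gaussian kernel (`σ² > ln 20 / 200`,
equivalently `40 exp (-200 σ²) < 2`), the smoothed objective
`x ↦ x² + σ² + 0.1 exp (-200 σ²) sin (20 x)` is strictly convex on `ℝ`. -/
theorem smoothed_example_objective_strictly_convex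
    (σ : ℝ) (hσ : 0 < σ) (hσ' : Real.log 20 / 200 < σ ^ 2) :
    StrictConvexOn ℝ Set.univ
      (fun x : ℝ => x ^ 2 + σ ^ 2 + 0.1 * Real.exp (-200 * σ ^ 2) * Real.sin (20 * x)) := by
  have hc : Real.exp (-200 * σ ^ 2) < 1 / 20 := by
    rw [← Real.lt_log_iff_exp_lt (by norm_num), one_div, Real.log_inv]
    linarith
  have hpos := Real.exp_pos (-200 * σ ^ 2)
  generalize Real.exp (-200 * σ ^ 2) = c at hc hpos ⊢
  have h1 : deriv (fun x : ℝ => x ^ 2 + σ ^ 2 + 0.1 * c * Real.sin (20 * x)) =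
      fun x => 2 * x + 2 * c * Real.cos (20 * x) := by
    funext x
    have hlin : HasDerivAt (fun x : ℝ => 20 * x) 20 x := by
      simpa using (hasDerivAt_id x).const_mul (20 : ℝ)
    have h := (((hasDerivAt_pow 2 x).add_const (σ ^ 2)).add (hlin.sin.const_mul (0.1 * c))).deriv
    refine Eq.trans h ?_
    norm_num
    ring
  have h2 (x : ℝ) : deriv (fun x : ℝ => 2 * x + 2 * c * Real.cos (20 * x)) x =
      2 - 40 * c * Real.sin (20 * x) := by
    have hlin : HasDerivAt (fun x : ℝ => 20 * x) 20 x := by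
      simpa using (hasDerivAt_id x).const_mul (20 : ℝ)
    have h := (((hasDerivAt_id x).const_mul (2 : ℝ)).add (hlin.cos.const_mul (2 * c))).deriv
    refine Eq.trans h ?_
    ring
  refine strictConvexOn_univ_of_deriv2_pos (by fun_prop) fun x => ?_
  rw [Function.iterate_succ_apply, Function.iterate_one, h1, h2]
  nlinarith [Real.sin_le_one (20 * x)]
end

section
/- Let k > 0 and σ > 0, and define the penalty normal force f_n(φ) = −k·min(φ, 0). Then the Gaussian-smoothed penalty force f̄_n(x) = ∫ (−k·min(x+w, 0)) φ_σ(w) dw is strictly positive for every x ∈ ℝ. (Randomized smoothing of the penalty contact model applies repulsive normal forces at a distance, even when the objects are not in contact.) -/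
/-!
The integrand is continuous and nonnegative, and it is nonzero at `w = -x - 1`, because the
Gaussian density vanishes nowhere. A continuous nonnegative integrable function that is nonzero
somewhere has positive integral. Integrability follows from `|min (x + w) 0| ≤ |x| + |w|` and the
integrability of `exp (-b w²)` and `w exp (-b w²)` for `b > 0`.
-/

open MeasureTheory Real

/-- Randomized smoothing of the penalty contact model applies repulsive normal
forces at a distance: the Gaussian-smoothed penalty force
`f̄_n x = ∫ (-k min (x + w) 0) φ_σ(w) dw` is strictly positive for every `x`. -/
theorem gaussian_smoothed_penalty_force_pos
    (k σ : ℝ) (hk : 0 < k) (hσ : 0 < σ)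
    (φ : ℝ → ℝ)
    (hφ : ∀ w : ℝ, φ w = (σ * Real.sqrt (2 * Real.pi))⁻¹ * Real.exp (-w ^ 2 / (2 * σ ^ 2)))
    (x : ℝ) :
    0 < ∫ w : ℝ, (-k * min (x + w) 0) * φ w := by
  have hφpos : ∀ w, 0 < φ w := fun w => by rw [hφ]; positivity
  have hφcont : Continuous φ := by
    rw [funext hφ]
    fun_prop
  have hcont : Continuous fun w : ℝ => (-k * min (x + w) 0) * φ w := by fun_prop
  have hb : 0 < (2 * σ ^ 2)⁻¹ := by positivity
  have hφ' : ∀ w, φ w = (σ * √(2 * π))⁻¹ * rexp (-(2 * σ ^ 2)⁻¹ * w ^ 2) := fun w => by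
    rw [hφ]
    congr 2
    ring
  have h0 : Integrable φ := by
    rw [funext hφ']
    exact (integrable_exp_neg_mul_sq hb).const_mul _
  have h1 : Integrable fun w => w * φ w := by
    refine ((integrable_mul_exp_neg_mul_sq hb).const_mul (σ * √(2 * π))⁻¹).congr
      (.of_forall fun w => ?_)
    simp only [hφ']
    ring
  have hint : Integrable fun w : ℝ => (-k * min (x + w) 0) * φ w := by
    refine (((h0.const_mul |x|).add h1.norm).const_mul k).mono' hcont.aestronglyMeasurable
      (.of_forall fun w => ?_)
    have hmin : |min (x + w) 0| ≤ |x| + |w| := by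
      rcases min_cases (x + w) 0 with ⟨h, -⟩ | ⟨h, -⟩ <;> rw [h]
      · exact abs_add_le x w
      · simp only [abs_zero]; positivity
    simp only [Pi.add_apply, norm_mul, norm_neg, Real.norm_eq_abs, abs_of_pos hk,
      abs_of_pos (hφpos w)]
    calc k * |min (x + w) 0| * φ w ≤ k * (|x| + |w|) * φ w := by
          gcongr
          exact (hφpos w).le
      _ = k * (|x| * φ w + |w| * φ w) := by ring
  have hnonneg : 0 ≤ fun w : ℝ => (-k * min (x + w) 0) * φ w := fun w =>
    mul_nonneg (mul_nonneg_of_nonpos_of_nonpos (by linarith) (min_le_right _ _)) (hφpos w).le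
  refine integral_pos_of_integrable_nonneg_nonzero (x := -x - 1) hcont hint hnonneg ?_
  have hm : min (x + (-x - 1)) 0 = -1 := by
    rw [min_eq_left (by linarith)]
    ring
  simp only [hm]
  exact mul_ne_zero (by linarith) (hφpos _).ne'
end
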